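/- Let i > p−1 and let γ ∈ Ĥ_i with J_i(γ) ≠ {0}. Then the Lie ring L_i(γ) = 𝔭^i/J_i(γ) is nilpotent of class at most p−1; that is, W_p(i) ⊆ J_i(γ). -/

import Mathlib

set_option synthInstance.maxHeartbeats 1000000
set_option maxHeartbeats 1000000

namespace MaximalClassFrame

variable (p : ℕ) [Fact p.Prime]
variable (K : Type) [Field K] [Algebra ℚ_[p] K] [Algebra ℤ_[p] K]
  [IsScalarTower ℤ_[p] ℚ_[p] K]

/-- The maximal order `𝒪` of `K`: the integral closure of `ℤ_p` in `K`. -/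
noncomputable abbrev 𝒪 : Subalgebra ℤ_[p] K := integralClosure ℤ_[p] K

variable (θ : 𝒪 p K)

/-- The maximal ideal `𝔭` of `𝒪`, generated by `κ = θ - 1`. -/
noncomputable def pid : Ideal (𝒪 p K) := Ideal.span {θ - 1}

/-- A `ℤ_p`-bilinear map `γ : 𝒪 × 𝒪 → 𝒪` is `P`-equivariant if it is
alternating and satisfies `γ(θx, θy) = θ·γ(x,y)` for all `x, y`. -/
def IsPEquivariant (γ : 𝒪 p K →ₗ[ℤ_[p]] 𝒪 p K →ₗ[ℤ_[p]] 𝒪 p K) : Prop :=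
  (∀ x, γ x x = 0) ∧ ∀ x y, γ (θ * x) (θ * y) = θ * γ x y

/-- `γ ∈ Ĥ_i`: the additive subgroup of `𝒪` generated by
`{γ(x,y) : x, y ∈ 𝔭^i}` equals `𝔭^(2i+1)`. -/
def InHhat (i : ℕ) (γ : 𝒪 p K →ₗ[ℤ_[p]] 𝒪 p K →ₗ[ℤ_[p]] 𝒪 p K) : Prop :=
  Submodule.span ℤ (Set.image2 (fun x y => γ x y)
      ((pid p K θ ^ i : Ideal (𝒪 p K)) : Set (𝒪 p K))
      ((pid p K θ ^ i : Ideal (𝒪 p K)) : Set (𝒪 p K)))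
    = (pid p K θ ^ (2 * i + 1)).restrictScalars ℤ

variable (γ : 𝒪 p K →ₗ[ℤ_[p]] 𝒪 p K →ₗ[ℤ_[p]] 𝒪 p K)

/-- The ideal `J_i(γ)` of `𝒪` generated by the Jacobi expressions
`γ(γ(x,y),z) + γ(γ(y,z),x) + γ(γ(z,x),y)` for `x, y, z ∈ 𝔭^i`. -/
noncomputable def Jid (i : ℕ) : Ideal (𝒪 p K) :=
  Ideal.span {v : 𝒪 p K | ∃ x ∈ pid p K θ ^ i, ∃ y ∈ pid p K θ ^ i, ∃ z ∈ pid p K θ ^ i,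
    v = γ (γ x y) z + γ (γ y z) x + γ (γ z x) y}

/-- The ideals `W_k(i)`:  `W_1(i) = 𝔭^i` and `W_{k+1}(i)` is the ideal
generated by `{γ(x,y) : x ∈ W_k(i), y ∈ 𝔭^i}`. -/
noncomputable def Wid (i : ℕ) : ℕ → Ideal (𝒪 p K)
  | 0 => ⊤
  | 1 => pid p K θ ^ i
  | (k + 2) => Ideal.span (Set.image2 (fun x y => γ x y)
      ((Wid i (k + 1) : Ideal (𝒪 p K)) : Set (𝒪 p K))
      ((pid p K θ ^ i : Ideal (𝒪 p K)) : Set (𝒪 p K)))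

/-!
Fourier inversion over `ZMod p` writes `γ` in the form `γ x y = ∑ a, c a * σ a x * σ (1 - a) y` and
isolates single terms of `γ` and of its Jacobi expressions, at the cost of a factor `p` and `p ^ 2`
respectively. Let `κ = θ - 1`, `|κ| ^ (p - 1) = |p|`, and let `M` be the largest of the `|c a|`.
Isolating a term of `γ` gives `M * |κ| ^ (p - 2) ≤ 1`, and each bracket after the first multiplies
sizes by at most `M`, so elements of `W_p(i)` have size at most `|κ| ^ (p * i + 1) * M ^ (p - 2)`.
On the other hand some Jacobi expression of the structure constants has size `M ^ 2`, so `J_i(γ)`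
contains an element of size at least `|p| ^ 2 * M ^ 2 * |κ| ^ (3 * i)`. For `p ≤ i` the second bound
dominates the first.
-/

section QuasiCommutation

open Relation

variable {X : Type*} {r s : X → X → Prop}

theorem acc_swap_of_reflTransGen {x y : X} (h : ReflTransGen r x y) (hx : Acc (Function.swap r) x) :
    Acc (Function.swap r) y := by
  induction h with
  | refl => exact hx
  | tail _ hbc ih => exact ih.inv hbc

theorem wellFounded_swap_sup_of_quasiCommute (hr : WellFounded (Function.swap r))
    (hs : WellFounded (Function.swap s))
    (hrs : ∀ x y z, s x y → r y z → ∃ w, r x w ∧ ReflTransGen (r ⊔ s) w z) :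
    WellFounded (Function.swap (r ⊔ s)) := by
  have exists_r_step (x : X) (hx : ¬Acc (Function.swap (r ⊔ s)) x) :
      ∃ y, r x y ∧ ¬Acc (Function.swap (r ⊔ s)) y := by
    induction x using hs.induction with
    | _ x ih =>
      obtain ⟨y, hy, hxy | hxy⟩ := exists_not_acc_lt_of_not_acc hx
      · exact ⟨y, hxy, hy⟩
      · obtain ⟨z, hyz, hz⟩ := ih y hxy hy
        obtain ⟨w, hxw, hwz⟩ := hrs x y z hxy hyz
        exact ⟨w, hxw, fun hw => hz (acc_swap_of_reflTransGen hwz hw)⟩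
  refine ⟨fun x => ?_⟩
  induction x using hr.induction with
  | _ x ih =>
    by_contra hx
    obtain ⟨y, hxy, hy⟩ := exists_r_step x hx
    exact hy (ih y hxy)

end QuasiCommutation

section Step

variable {G : Type*} [AddCommGroup G] {E : G → G → Prop}

/-- The steps `x ↦ a + x` with increment `a ∈ T`, admissible when `E a x` holds. In the application
`E a x` says that the bracket of the components of degrees `a` and `x` is as large as possible. -/
def Step (E : G → G → Prop) (T : Set G) (x y : G) : Prop :=
  ∃ a ∈ T, E a x ∧ a + x = y

theorem step_insert (E : G → G → Prop) (a : G) (T : Set G) :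
    Step E (insert a T) = Step E T ⊔ Step E {a} := by
  ext x y
  simp only [Step, Set.mem_insert_iff, or_and_right, exists_or, exists_eq_left, Pi.sup_apply,
    sup_Prop_eq, Set.mem_singleton_iff, or_comm]

theorem wellFounded_swap_step [Finite G]
    (singleton : ∀ a, WellFounded (Function.swap (Step E {a})))
    (exchange : ∀ a b x, E b x → E a (b + x) →
      E a x ∧ E b (a + x) ∨ E a b ∧ E (a + b) x) :
    WellFounded (Function.swap (Step E Set.univ)) := by
  let terminating : Set (Set G) := {T | WellFounded (Function.swap (Step E T))}
  have empty_mem : ∅ ∈ terminating := ⟨fun _ => ⟨_, fun _ ⟨_, ha, _⟩ => ha.elim⟩⟩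
  obtain ⟨T, hT, hmax⟩ :=
    terminating.toFinite.exists_maximal (Set.nonempty_of_mem empty_mem)
  suffices Tᶜ = ∅ by rwa [Set.compl_empty_iff.1 this] at hT
  by_contra hne
  obtain ⟨b, hb, hbT⟩ := hT.has_min Tᶜ (Set.nonempty_iff_ne_empty.2 hne)
  -- Steps in `T` can be moved in front of steps by `b`, unless they merge with them into a step by
  -- `a + b`, which lies in `T` by the choice of `b`.
  have insert_mem : insert b T ∈ terminating := by
    change WellFounded _
    rw [step_insert]
    refine wellFounded_swap_sup_of_quasiCommute hT (singleton b) ?_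
    rintro x _ _ ⟨b, rfl, hbx, rfl⟩ ⟨a, ha, hax, rfl⟩
    obtain ⟨hax, hbax⟩ | ⟨hab, habx⟩ := exchange a b x hbx hax
    · exact ⟨a + x, ⟨a, ha, hax, rfl⟩, .single (.inr ⟨b, rfl, hbax, add_left_comm _ _ _⟩)⟩
    · have habT : a + b ∈ T := of_not_not fun h => hbT _ h ⟨a, ha, hab, rfl⟩
      exact ⟨_, ⟨a + b, habT, habx, rfl⟩, by rw [add_assoc]⟩
  exact hb (hmax insert_mem (Set.subset_insert b T) (Set.mem_insert b T))

theorem wellFounded_swap_step_singleton {p : ℕ} [Fact p.Prime] {E : ZMod p → ZMod p → Prop}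
    {a : ZMod p} (ha : a ≠ 0) (h : ¬E a 0) : WellFounded (Function.swap (Step E {a})) := by
  refine Subrelation.wf ?_ (measure fun x : ZMod p => (-x / a).val).wf
  rintro _ x ⟨a, rfl, hx, rfl⟩
  have hx0 : x ≠ 0 := fun h0 => h (h0 ▸ hx)
  have hne : -x / a ≠ 0 := div_ne_zero (neg_ne_zero.2 hx0) ha
  change (-(a + x) / a).val < (-x / a).val
  rw [neg_add, add_div, neg_div_self ha, neg_add_eq_sub, ZMod.val_sub, ZMod.val_one]
  · exact Nat.sub_lt (ZMod.val_pos.2 hne) one_pos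
  · rw [ZMod.val_one]
    exact ZMod.val_pos.2 hne

end Step

section JacobiConst

variable {G L : Type*} [AddCommGroup G] [CommRing L] {N : G → G → L}

/-- The Jacobi expression of basis vectors `e s`, `e t`, `e u` for the bracket
`[e s, e t] = N s t • e (s + t)`. -/
def jacobiConst (N : G → G → L) (s t u : G) : L :=
  N s t * N (s + t) u + N t u * N (t + u) s + N u s * N (u + s) t

theorem jacobiConst_rotate (N : G → G → L) (s t u : G) :
    jacobiConst N t u s = jacobiConst N s t u := by
  simp only [jacobiConst]
  ring

theorem jacobiConst_zero_left (hskew : ∀ s t, N t s = -N s t) (hzero : ∀ s, N s 0 = 0) (t u : G) :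
    jacobiConst N 0 t u = 0 := by
  simp [jacobiConst, hzero, hskew t 0]

end JacobiConst

section JacobiValuation

variable {L Γ₀ : Type*} [CommRing L] [LinearOrderedCommGroupWithZero Γ₀] (v : Valuation L Γ₀)

theorem eq_and_eq_of_sq_le_mul {a b m : Γ₀} (ha : a ≤ m) (hb : b ≤ m) (h : m ^ 2 ≤ a * b) :
    a = m ∧ b = m := by
  refine ⟨ha.eq_of_not_lt fun h' => ?_, hb.eq_of_not_lt fun h' => ?_⟩
  · exact (h.trans (mul_le_mul_right hb a)).not_gt
      (by rw [sq]; exact mul_lt_mul_of_pos_right h' (zero_le.trans_lt h'))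
  · exact (h.trans (mul_le_mul_left ha b)).not_gt
      (by rw [sq]; exact mul_lt_mul_of_pos_left h' (zero_le.trans_lt h'))

theorem exchange_of_jacobi_lt {G : Type*} [AddCommGroup G] {N : G → G → L} {M : Γ₀}
    (hNM : ∀ s t, v (N s t) ≤ M) (hskew : ∀ s t, N t s = -N s t)
    (hjac : ∀ s t u, v (jacobiConst N s t u) < M ^ 2)
    {a b x : G} (hbx : v (N b x) = M) (habx : v (N a (b + x)) = M) :
    v (N a x) = M ∧ v (N b (a + x)) = M ∨ v (N a b) = M ∧ v (N (a + b) x) = M := by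
  suffices M ^ 2 ≤ max (v (N a x * N b (a + x))) (v (N a b * N (a + b) x)) by
    simp only [le_max_iff, map_mul] at this
    exact this.imp (eq_and_eq_of_sq_le_mul (hNM _ _) (hNM _ _))
      (eq_and_eq_of_sq_le_mul (hNM _ _) (hNM _ _))
  by_contra! hlt
  obtain ⟨hY, hZ⟩ := max_lt_iff.1 hlt
  have hX : v (N b x * N a (b + x)) = M ^ 2 := by rw [map_mul, hbx, habx, sq]
  have key : N b x * N a (b + x) = N a x * N b (a + x) + N a b * N (a + b) x
      - jacobiConst N a b x := by
    rw [jacobiConst, hskew a (b + x), hskew a x, hskew b (x + a), add_comm x a]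
    ring
  exact (v.map_sub_lt (v.map_add_lt hY hZ) (hjac a b x)).ne (key ▸ hX)

/-- If no Jacobi constant had valuation at least `M ^ 2`, then modulo smaller terms the structure
constants of valuation `M` would define a `ZMod p`-graded Lie algebra whose component of degree
zero vanishes; such a Lie algebra is nilpotent, which is incompatible with an infinite walk. -/
theorem exists_sq_le_valuation_jacobi {p : ℕ} [Fact p.Prime] {N : ZMod p → ZMod p → L} {M : Γ₀}
    (hM : M ≠ 0) (hNM : ∀ s t, v (N s t) ≤ M) (hskew : ∀ s t, N t s = -N s t)
    (hzero : ∀ s, N s 0 = 0) {Y : Set (ZMod p)} (hY : Y.Nonempty)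
    (hwalk : ∀ y ∈ Y, ∃ a, v (N a y) = M ∧ a + y ∈ Y) :
    ∃ s t u, M ^ 2 ≤ v (jacobiConst N s t u) := by
  by_contra! hjac
  have not_zero_right (s) : ¬v (N s 0) = M := by simpa [hzero] using hM.symm
  have not_zero_left (s) : ¬v (N 0 s) = M := by simpa [hskew s 0, hzero] using hM.symm
  have wf : WellFounded (Function.swap (Step (fun a x => v (N a x) = M) Set.univ)) := by
    refine wellFounded_swap_step (fun a => ?_)
      fun a b x => exchange_of_jacobi_lt v hNM hskew hjac
    obtain rfl | ha := eq_or_ne a 0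
    · exact ⟨fun x => ⟨_, fun _ ⟨_, hb, h, _⟩ => (not_zero_left x (hb ▸ h)).elim⟩⟩
    · exact wellFounded_swap_step_singleton ha (not_zero_right a)
  obtain ⟨y, hyY, hy⟩ := wf.has_min Y hY
  obtain ⟨a, ha, hay⟩ := hwalk y hyY
  exact hy _ hay ⟨a, Set.mem_univ a, ha, rfl⟩

end JacobiValuation

section Jacobiator

/-- The Jacobi expression of a bilinear map. -/
def jacobiator {R M : Type*} [CommSemiring R] [AddCommMonoid M] [Module R M]
    (B : M →ₗ[R] M →ₗ[R] M) (x y z : M) : M :=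
  B (B x y) z + B (B y z) x + B (B z x) y

theorem sum_sum_rotate {G A : Type*} [AddCommGroup G] [Fintype G] [AddCommMonoid A]
    (g : G → G → G → A) (r : G) :
    ∑ s, ∑ t, g s t (r - s - t) = ∑ s, ∑ t, g t (r - s - t) s := by
  rw [Finset.sum_comm (f := fun s t => g t (r - s - t) s)]
  refine Finset.sum_congr rfl fun s _ => Fintype.sum_equiv (Equiv.subLeft (r - s)) _ _ fun t => ?_
  rw [Equiv.subLeft_apply, sub_right_comm r (r - s - t), sub_sub_self]

end Jacobiator

section TwistedBracket

variable {k F L : Type*} [Field k] [DecidableEq k] [CommRing F] [CommRing L] [Algebra F L]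
  (σ : kˣ →* (L ≃ₐ[F] L))

/-- The action of `k` on `L` extending that of the units `kˣ` by letting `0` act as zero. -/
def conj (b : k) : L →ₙₐ[F] L :=
  if h : b = 0 then 0 else ((σ (Units.mk0 b h) : L →ₐ[F] L) : L →ₙₐ[F] L)

@[simp]
theorem conj_zero (x : L) : conj σ 0 x = 0 := by
  simp [conj]

theorem conj_of_ne_zero {b : k} (hb : b ≠ 0) (x : L) : conj σ b x = σ (Units.mk0 b hb) x := by
  simp only [conj, dif_neg hb]
  rfl

@[simp]
theorem conj_one (x : L) : conj σ 1 x = x := by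
  simp [conj_of_ne_zero σ one_ne_zero]

theorem conj_conj (a b : k) (x : L) : conj σ a (conj σ b x) = conj σ (a * b) x := by
  obtain rfl | ha := eq_or_ne a 0
  · simp
  obtain rfl | hb := eq_or_ne b 0
  · simp
  simp [conj_of_ne_zero, ha, hb, mul_ne_zero ha hb, Units.mk0_mul]

variable (c : k → L)

/-- The structure constants of `twistedBracket σ c` after extension of scalars: the component of
degree `s + t` of the bracket of components of degrees `s` and `t`, where the component of degree
`s` of `x` is `σ s x`. -/
def structConst (s t : k) : L :=
  conj σ (s + t) (c (s / (s + t)))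

theorem structConst_mul {b : k} (hb : b ≠ 0) (s t : k) :
    structConst σ c (b * s) (b * t) = conj σ b (structConst σ c s t) := by
  rw [structConst, structConst, conj_conj, ← mul_add, mul_div_mul_left _ _ hb]

theorem structConst_one_sub (b : k) : structConst σ c b (1 - b) = c b := by
  simp [structConst]

theorem structConst_of_add_eq_zero {s t : k} (h : s + t = 0) : structConst σ c s t = 0 := by
  simp [structConst, h]

variable {c}

theorem structConst_swap (hc : ∀ a, c (1 - a) = -c a) (s t : k) :
    structConst σ c t s = -structConst σ c s t := by
  obtain h | h := eq_or_ne (s + t) 0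
  · rw [structConst_of_add_eq_zero σ c h, structConst_of_add_eq_zero σ c (add_comm t s ▸ h),
      neg_zero]
  · have : t / (s + t) = 1 - s / (s + t) := by field_simp; ring
    rw [structConst, structConst, add_comm t s, this, hc, map_neg]

theorem structConst_zero_right (hc1 : c 1 = 0) (s : k) : structConst σ c s 0 = 0 := by
  obtain rfl | h := eq_or_ne s 0
  · exact structConst_of_add_eq_zero σ c (add_zero 0)
  · rw [structConst, add_zero, div_self h, hc1, map_zero]

variable [Fintype k] (c)

/-- The bilinear map `(x, y) ↦ ∑ a, c a * σ a x * σ (1 - a) y`. -/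
noncomputable def twistedBracket : L →ₗ[F] L →ₗ[F] L :=
  ∑ a, c a • (LinearMap.mul F L).compl₁₂ (conj σ a : L →ₗ[F] L) (conj σ (1 - a) : L →ₗ[F] L)

theorem twistedBracket_apply (x y : L) :
    twistedBracket σ c x y = ∑ a, c a * (conj σ a x * conj σ (1 - a) y) := by
  simp [twistedBracket]

theorem conj_twistedBracket (b : k) (x y : L) :
    conj σ b (twistedBracket σ c x y)
      = ∑ s, structConst σ c s (b - s) * (conj σ s x * conj σ (b - s) y) := by
  obtain rfl | hb := eq_or_ne b 0
  · simp [structConst_of_add_eq_zero]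
  rw [twistedBracket_apply, map_sum]
  refine Fintype.sum_equiv (Equiv.mulLeft₀ b hb) _ _ fun a => ?_
  have hba : b - b * a = b * (1 - a) := by ring
  rw [Equiv.mulLeft₀_apply, hba, structConst_mul σ c hb, structConst_one_sub]
  simp only [map_mul, conj_conj]

theorem twistedBracket_twistedBracket (x y z : L) :
    twistedBracket σ c (twistedBracket σ c x y) z
      = ∑ s, ∑ t, structConst σ c s t * structConst σ c (s + t) (1 - s - t) *
          (conj σ s x * conj σ t y * conj σ (1 - s - t) z) := by
  calc
    _ = ∑ s, ∑ b, structConst σ c s (b - s) * c b *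
          (conj σ s x * conj σ (b - s) y * conj σ (1 - b) z) := by
      rw [twistedBracket_apply, Finset.sum_comm]
      refine Finset.sum_congr rfl fun b _ => ?_
      rw [conj_twistedBracket, Finset.sum_mul, Finset.mul_sum]
      exact Finset.sum_congr rfl fun s _ => by ring
    _ = _ := by
      refine Finset.sum_congr rfl fun s _ => ?_
      refine (Fintype.sum_equiv (Equiv.addLeft s) _ _ fun t => ?_).symm
      rw [Equiv.coe_addLeft, add_sub_cancel_left, sub_sub, structConst_one_sub]

theorem jacobiator_twistedBracket (x y z : L) :
    jacobiator (twistedBracket σ c) x y z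
      = ∑ s, ∑ t, jacobiConst (structConst σ c) s t (1 - s - t) *
          (conj σ s x * conj σ t y * conj σ (1 - s - t) z) := by
  let term (x y z : L) (s t u : k) : L :=
    structConst σ c s t * structConst σ c (s + t) u * (conj σ s x * conj σ t y * conj σ u z)
  have expand (x y z : L) : twistedBracket σ c (twistedBracket σ c x y) z
      = ∑ s, ∑ t, term x y z s t (1 - s - t) := twistedBracket_twistedBracket σ c x y z
  rw [jacobiator, expand, expand, expand, sum_sum_rotate (term y z x),
    ← sum_sum_rotate (fun s t u => term z x y u s t), ← Finset.sum_add_distrib,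
    ← Finset.sum_add_distrib]
  refine Finset.sum_congr rfl fun s _ => ?_
  rw [← Finset.sum_add_distrib, ← Finset.sum_add_distrib]
  refine Finset.sum_congr rfl fun t _ => ?_
  rw [jacobiConst]
  ring

end TwistedBracket

section TwistedBracketValuation

variable {k F L Γ₀ : Type*} [Field k] [DecidableEq k] [CommRing F] [CommRing L] [Algebra F L]
  [LinearOrderedCommGroupWithZero Γ₀] {σ : kˣ →* (L ≃ₐ[F] L)} {v : Valuation L Γ₀}

theorem valuation_conj (hv : ∀ b x, v (σ b x) = v x) {b : k} (hb : b ≠ 0) (x : L) :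
    v (conj σ b x) = v x := by
  rw [conj_of_ne_zero σ hb, hv]

theorem valuation_conj_le (hv : ∀ b x, v (σ b x) = v x) (b : k) (x : L) :
    v (conj σ b x) ≤ v x := by
  obtain rfl | hb := eq_or_ne b 0
  · simp
  · exact (valuation_conj hv hb x).le

theorem valuation_twistedBracket_le [Fintype k] (hv : ∀ b x, v (σ b x) = v x) {c : k → L} {M : Γ₀}
    (hM : ∀ a, v (c a) ≤ M) (x y : L) : v (twistedBracket σ c x y) ≤ M * (v x * v y) := by
  rw [twistedBracket_apply]
  refine v.map_sum_le fun a _ => ?_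
  rw [map_mul, map_mul]
  gcongr
  exacts [hM a, valuation_conj_le hv a x, valuation_conj_le hv (1 - a) y]

theorem valuation_jacobiConst_mul (hv : ∀ b x, v (σ b x) = v x) (c : k → L) {b : k} (hb : b ≠ 0)
    (s t u : k) :
    v (jacobiConst (structConst σ c) (b * s) (b * t) (b * u))
      = v (jacobiConst (structConst σ c) s t u) := by
  rw [← valuation_conj hv hb (jacobiConst _ s t u)]
  simp only [jacobiConst, ← mul_add, structConst_mul σ c hb, map_add, map_mul]

theorem ne_zero_of_jacobiConst_structConst_ne_zero {c : k → L} (hc : ∀ a, c (1 - a) = -c a)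
    (hc1 : c 1 = 0) {s t u : k} (h : jacobiConst (structConst σ c) s t u ≠ 0) :
    s ≠ 0 ∧ t ≠ 0 ∧ u ≠ 0 ∧ s + t + u ≠ 0 := by
  have zero_left (t u : k) : jacobiConst (structConst σ c) 0 t u = 0 :=
    jacobiConst_zero_left (structConst_swap σ hc) (structConst_zero_right σ hc1) t u
  refine ⟨?_, ?_, ?_, fun h0 => h ?_⟩
  · rintro rfl
    exact h (zero_left t u)
  · rintro rfl
    exact h ((jacobiConst_rotate _ s 0 u).symm.trans (zero_left u s))
  · rintro rfl
    exact h ((jacobiConst_rotate _ 0 s t).trans (zero_left s t))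
  · simp [jacobiConst, structConst_of_add_eq_zero, h0, show t + u + s = 0 by linear_combination h0,
      show u + s + t = 0 by linear_combination h0]

theorem exists_sq_le_valuation_jacobiConst_structConst {p : ℕ} [Fact p.Prime]
    {σ : (ZMod p)ˣ →* (L ≃ₐ[F] L)} (hv : ∀ b x, v (σ b x) = v x) {c : ZMod p → L}
    (hc : ∀ a, c (1 - a) = -c a) (hc1 : c 1 = 0) {a : ZMod p} (ha : v (c a) ≠ 0)
    (hmax : ∀ b, v (c b) ≤ v (c a)) :
    ∃ s t u, v (c a) ^ 2 ≤ v (jacobiConst (structConst σ c) s t u) := by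
  have ha1 : 1 - a ≠ 0 := fun h => ha (by rw [← sub_eq_zero.1 h, hc1, map_zero])
  refine exists_sq_le_valuation_jacobi v ha
    (fun s t => (valuation_conj_le hv _ _).trans (hmax _)) (structConst_swap σ hc)
    (structConst_zero_right σ hc1) (Y := {0}ᶜ) ⟨1, one_ne_zero⟩ fun y hy => ?_
  let b := y / (1 - a)
  have hb : b ≠ 0 := div_ne_zero hy ha1
  have hby : y = b * (1 - a) := (div_mul_cancel₀ y ha1).symm
  refine ⟨b * a, ?_, ?_⟩
  · rw [hby, structConst_mul σ c hb, structConst_one_sub, valuation_conj hv hb]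
  · rwa [hby, ← mul_add, add_sub_cancel, mul_one]

theorem exists_le_valuation_jacobiConst_mul {p : ℕ} [Fact p.Prime]
    {σ : (ZMod p)ˣ →* (L ≃ₐ[F] L)} (hv : ∀ b x, v (σ b x) = v x) {c : ZMod p → L}
    (hc : ∀ a, c (1 - a) = -c a) (hc1 : c 1 = 0) {a : ZMod p}
    (hmax : ∀ b, v (c b) ≤ v (c a)) (x : L) :
    ∃ s t, v (c a) ^ 2 * v x ^ 3 ≤ v (jacobiConst (structConst σ c) s t (1 - s - t) *
      (conj σ s x * conj σ t x * conj σ (1 - s - t) x)) := by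
  obtain ha | ha := eq_or_ne (v (c a)) 0
  · exact ⟨0, 0, by simp [ha]⟩
  obtain ⟨s, t, u, h⟩ := exists_sq_le_valuation_jacobiConst_structConst hv hc hc1 ha hmax
  have hne : jacobiConst (structConst σ c) s t u ≠ 0 := by
    intro h0
    rw [h0, map_zero] at h
    exact pow_ne_zero 2 ha (le_antisymm h zero_le)
  obtain ⟨hs, ht, hu, hstu⟩ := ne_zero_of_jacobiConst_structConst_ne_zero hc hc1 hne
  have hsub : 1 - s / (s + t + u) - t / (s + t + u) = u / (s + t + u) := by field_simp; ring
  refine ⟨s / (s + t + u), t / (s + t + u), ?_⟩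
  rw [hsub, map_mul, map_mul, map_mul, valuation_conj hv (div_ne_zero hs hstu),
    valuation_conj hv (div_ne_zero ht hstu), valuation_conj hv (div_ne_zero hu hstu),
    ← valuation_jacobiConst_mul hv c hstu, mul_div_cancel₀ _ hstu, mul_div_cancel₀ _ hstu,
    mul_div_cancel₀ _ hstu, pow_three', mul_assoc (v x)]
  gcongr

end TwistedBracketValuation

section FourierSum

variable {R A V : Type*} [CommRing R] [Fintype R] [CommRing A] [AddCommGroup V] [Module A V]
  {ψ : AddChar R A}

/-- The Fourier transform, without normalisation, of a function on `R` with values in a module. -/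
def fourierSum (ψ : AddChar R A) (D : R → V) (k : R) : V :=
  ∑ t, ψ (t * k) • D t

theorem fourierSum_fourierSum [IsDomain A] (hψ : ψ.IsPrimitive) (D : R → V) (s : R) :
    fourierSum ψ (fourierSum ψ D) s = (Fintype.card R : A) • D (-s) := by
  classical
  calc
    _ = ∑ t, (∑ k, ψ (k * (s + t))) • D t := by
      simp only [fourierSum, Finset.smul_sum, Finset.sum_smul, smul_smul]
      rw [Finset.sum_comm]
      refine Finset.sum_congr rfl fun t _ => Finset.sum_congr rfl fun k _ => ?_
      rw [← AddChar.map_add_eq_mul, mul_add, mul_comm t k]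
    _ = ∑ t, if t = -s then (Fintype.card R : A) • D t else 0 := by
      refine Finset.sum_congr rfl fun t _ => ?_
      rw [AddChar.sum_mulShift _ hψ]
      simp only [eq_neg_iff_add_eq_zero, add_comm t s]
      split_ifs <;> simp
    _ = _ := by rw [Finset.sum_ite_eq' _ _ _, if_pos (Finset.mem_univ _)]

theorem map_fourierSum {W : Type*} [AddCommGroup W] [Module A W] (f : V →ₗ[A] W) (D : R → V)
    (k : R) : f (fourierSum ψ D k) = fourierSum ψ (fun t => f (D t)) k := by
  simp [fourierSum]

theorem fourierSum_smul (a : A) (D : R → V) (k : R) :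
    fourierSum ψ (fun t => a • D t) k = a • fourierSum ψ D k :=
  (map_fourierSum (LinearMap.lsmul A V a) D k).symm

end FourierSum

section TorsionSpan

variable {R M M' : Type*} [CommRing R] [IsDomain R] [AddCommGroup M] [Module R M]
  [AddCommGroup M'] [Module R M'] [Module.IsTorsionFree R M'] {S : Set M}

theorem linearMap_ext_of_smul_mem_span (hS : ∀ x, ∃ r : R, r ≠ 0 ∧ r • x ∈ Submodule.span R S)
    {f g : M →ₗ[R] M'} (hfg : ∀ x ∈ S, f x = g x) : f = g := by
  refine LinearMap.ext fun x => ?_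
  obtain ⟨r, hr, hx⟩ := hS x
  have := LinearMap.eqOn_span (fun x hx => hfg x hx) hx
  rw [map_smul, map_smul] at this
  exact smul_right_injective M' hr this

theorem linearMap_ext₂_of_smul_mem_span
    (hS : ∀ x, ∃ r : R, r ≠ 0 ∧ r • x ∈ Submodule.span R S)
    {f g : M →ₗ[R] M →ₗ[R] M'} (hfg : ∀ x ∈ S, ∀ y ∈ S, f x y = g x y) : f = g :=
  linearMap_ext_of_smul_mem_span hS fun x hx => linearMap_ext_of_smul_mem_span hS (hfg x hx)

end TorsionSpan

section TwistedFourier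

variable {k F A L : Type*} [Field k] [DecidableEq k] [CommRing F] [CommRing A] [CommRing L]
  [Algebra F L] [Algebra A L] {σ : kˣ →* (L ≃ₐ[F] L)} {ψ : AddChar k A}

/-- `σ b` acts on the values of the additive character `ψ` through multiplication of its argument
by `b`, as the automorphisms of a cyclotomic field do. -/
def Intertwines (σ : kˣ →* (L ≃ₐ[F] L)) (ψ : AddChar k A) : Prop :=
  ∀ (b : kˣ) m, σ b (algebraMap A L (ψ m)) = algebraMap A L (ψ (b * m))

theorem conj_smul (hσψ : Intertwines σ ψ) (b m : k) (x : L) :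
    conj σ b (ψ m • x) = ψ (b * m) • conj σ b x := by
  obtain rfl | hb := eq_or_ne b 0
  · simp
  · rw [conj_of_ne_zero σ hb, conj_of_ne_zero σ hb, Algebra.smul_def, map_mul, hσψ,
      Units.val_mk0, Algebra.smul_def]

variable [Fintype k]

theorem twistedBracket_smul_smul (hσψ : Intertwines σ ψ) (c : k → L) (m n : k)
    (x y : L) :
    twistedBracket σ c (ψ m • x) (ψ n • y)
      = ψ n • fourierSum ψ (fun a => c a * (conj σ a x * conj σ (1 - a) y)) (m - n) := by
  rw [twistedBracket_apply, fourierSum, Finset.smul_sum]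
  refine Finset.sum_congr rfl fun a _ => ?_
  rw [conj_smul hσψ, conj_smul hσψ, smul_mul_smul_comm, mul_smul_comm, smul_smul,
    ← AddChar.map_add_eq_mul, ← AddChar.map_add_eq_mul]
  congr 2
  ring

theorem jacobiator_twistedBracket_smul (hσψ : Intertwines σ ψ) (c : k → L)
    (m n : k) (x y z : L) :
    jacobiator (twistedBracket σ c) (ψ m • x) (ψ n • y) z
      = fourierSum ψ (fun t => fourierSum ψ (fun s =>
          jacobiConst (structConst σ c) s t (1 - s - t) *
            (conj σ s x * conj σ t y * conj σ (1 - s - t) z)) m) n := by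
  rw [jacobiator_twistedBracket, Finset.sum_comm]
  refine Finset.sum_congr rfl fun t _ => ?_
  dsimp only
  rw [fourierSum, Finset.smul_sum]
  refine Finset.sum_congr rfl fun s _ => ?_
  simp only [conj_smul hσψ, smul_mul_assoc, mul_smul_comm]

variable {R : Type*} [CommRing R] [Algebra R A] {γ : A →ₗ[R] A →ₗ[R] A} {c : k → L}

/-- The bilinear map `B` on the `A`-algebra `L` induces the bilinear map `γ` on `A`. -/
def RestrictsTo (B : L →ₗ[F] L →ₗ[F] L) (γ : A →ₗ[R] A →ₗ[R] A) : Prop :=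
  ∀ x y, algebraMap A L (γ x y) = B (algebraMap A L x) (algebraMap A L y)

theorem RestrictsTo.map_jacobiator {B : L →ₗ[F] L →ₗ[F] L} (h : RestrictsTo B γ) (x y z : A) :
    algebraMap A L (jacobiator γ x y z)
      = jacobiator B (algebraMap A L x) (algebraMap A L y) (algebraMap A L z) := by
  simp only [jacobiator, map_add, h _ _]

variable [IsDomain A]

theorem card_smul_coeff_eq (hψ : ψ.IsPrimitive) (hσψ : Intertwines σ ψ)
    (hγ : RestrictsTo (twistedBracket σ c) γ) (a : k) (x y : A) :
    (Fintype.card k : A) • (c a * (conj σ a (algebraMap A L x) * conj σ (1 - a) (algebraMap A L y)))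
      = algebraMap A L (fourierSum ψ (fun m => γ (ψ m * x) y) (-a)) := by
  have expand (m : k) : algebraMap A L (γ (ψ m * x) y) = fourierSum ψ
      (fun a => c a * (conj σ a (algebraMap A L x) * conj σ (1 - a) (algebraMap A L y))) m := by
    simpa [hγ _ _, Algebra.smul_def] using
      twistedBracket_smul_smul hσψ c m 0 (algebraMap A L x) (algebraMap A L y)
  have hmap := map_fourierSum (ψ := ψ) (Algebra.linearMap A L) (fun m => γ (ψ m * x) y) (-a)
  simp only [Algebra.linearMap_apply, expand] at hmap
  rw [hmap, fourierSum_fourierSum hψ, neg_neg]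

theorem exists_mem_algebraMap_eq_card_smul_jacobiConst (hψ : ψ.IsPrimitive) (hσψ : Intertwines σ ψ)
    (hγ : RestrictsTo (twistedBracket σ c) γ)
    {I J : Ideal A} (hJ : ∀ x ∈ I, ∀ y ∈ I, ∀ z ∈ I, jacobiator γ x y z ∈ J)
    {x y z : A} (hx : x ∈ I) (hy : y ∈ I) (hz : z ∈ I) (s t : k) :
    ∃ j ∈ J, algebraMap A L j = (Fintype.card k : A) ^ 2 •
      (jacobiConst (structConst σ c) s t (1 - s - t) * (conj σ s (algebraMap A L x) *
        conj σ t (algebraMap A L y) * conj σ (1 - s - t) (algebraMap A L z))) := by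
  refine ⟨fourierSum ψ (fun m => fourierSum ψ
      (fun n => jacobiator γ (ψ m * x) (ψ n * y) z) (-t)) (-s), ?_, ?_⟩
  · exact J.sum_mem fun m _ => J.mul_mem_left _ <| J.sum_mem fun n _ => J.mul_mem_left _ <|
      hJ _ (I.mul_mem_left _ hx) _ (I.mul_mem_left _ hy) _ hz
  · have expand (m n : k) := (hγ.map_jacobiator (ψ m * x) (ψ n * y) z).trans <| by
      rw [map_mul, map_mul, ← Algebra.smul_def, ← Algebra.smul_def,
        jacobiator_twistedBracket_smul hσψ]
    rw [← Algebra.linearMap_apply, map_fourierSum]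
    simp only [map_fourierSum, Algebra.linearMap_apply, expand, fourierSum_fourierSum hψ, neg_neg]
    rw [fourierSum_smul, fourierSum_fourierSum hψ, neg_neg, smul_smul, sq]

end TwistedFourier

section Coefficients

variable {k A R : Type*} [CommRing k] [CommRing A] [CommRing R] [Algebra R A]
  {ψ : AddChar k A} {γ : A →ₗ[R] A →ₗ[R] A}

/-- Equivariance of the bilinear map `γ` under simultaneous multiplication by the values of `ψ`. -/
def IsEquivariant (ψ : AddChar k A) (γ : A →ₗ[R] A →ₗ[R] A) : Prop :=
  ∀ m x y, γ (ψ m * x) (ψ m * y) = ψ m * γ x y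

theorem IsEquivariant.apply_apply (h : IsEquivariant ψ γ) (m n : k) :
    γ (ψ m) (ψ n) = ψ n * γ (ψ (m - n)) 1 := by
  rw [← h, ← AddChar.map_add_eq_mul, add_sub_cancel, mul_one]

variable [Fintype k]

/-- The Fourier coefficients of `m ↦ γ (ψ m) 1`, multiplied by the cardinality of `k`. -/
def fourierCoeff (ψ : AddChar k A) (γ : A →ₗ[R] A →ₗ[R] A) (a : k) : A :=
  fourierSum ψ (fun m => γ (ψ m) 1) (-a)

theorem fourierCoeff_one_sub (h : IsEquivariant ψ γ) (hγ : γ.IsAlt) (a : k) :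
    fourierCoeff ψ γ (1 - a) = -fourierCoeff ψ γ a := by
  have reflect (m : k) : γ (ψ m) 1 = -(ψ m * γ (ψ (-m)) 1) := by
    rw [← zero_sub m, ← h.apply_apply, AddChar.map_zero_eq_one, hγ.neg]
  rw [fourierCoeff, fourierCoeff, fourierSum, fourierSum, ← Finset.sum_neg_distrib]
  refine Fintype.sum_equiv (Equiv.neg k) _ _ fun m => ?_
  rw [reflect m, Equiv.neg_apply, smul_neg, smul_eq_mul, smul_eq_mul, ← mul_assoc,
    ← AddChar.map_add_eq_mul]
  congr 3
  ring

theorem fourierCoeff_zero [Nontrivial k] [IsDomain A] (hψ : ψ.IsPrimitive) :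
    fourierCoeff ψ γ 0 = 0 := by
  have hψ1 : ψ ≠ 1 := fun h => hψ one_ne_zero (by rw [h, AddChar.mulShift_one])
  calc
    fourierCoeff ψ γ 0 = γ (∑ m, ψ m) 1 := by simp [fourierCoeff, fourierSum]
    _ = 0 := by rw [AddChar.sum_eq_zero_of_ne_one hψ1, map_zero, LinearMap.zero_apply]

theorem fourierCoeff_one [Nontrivial k] [IsDomain A] (hψ : ψ.IsPrimitive)
    (h : IsEquivariant ψ γ) (hγ : γ.IsAlt) :
    fourierCoeff ψ γ 1 = 0 := by
  rw [← sub_zero (1 : k), fourierCoeff_one_sub h hγ, fourierCoeff_zero hψ, neg_zero]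

theorem fourierSum_fourierCoeff [IsDomain A] (hψ : ψ.IsPrimitive) (m : k) :
    fourierSum ψ (fourierCoeff ψ γ) m = (Fintype.card k : A) * γ (ψ m) 1 := by
  have inversion := fourierSum_fourierSum hψ (fun m => γ (ψ m) 1) (-m)
  rw [neg_neg, smul_eq_mul] at inversion
  rw [← inversion]
  refine Fintype.sum_equiv (Equiv.neg k) _ _ fun t => ?_
  rw [Equiv.neg_apply, neg_mul_neg, fourierCoeff]

end Coefficients

section BracketOfCoefficients

variable {k F A L R : Type*} [Field k] [Fintype k] [DecidableEq k] [CommRing F] [CommRing A]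
  [IsDomain A] [Field L] [Algebra F L] [Algebra A L] [CommRing R] [Algebra R A]
  {σ : kˣ →* (L ≃ₐ[F] L)} {ψ : AddChar k A} {γ : A →ₗ[R] A →ₗ[R] A}

theorem twistedBracket_fourierCoeff (hψ : ψ.IsPrimitive) (hσψ : Intertwines σ ψ)
    (hcard : (Fintype.card k : L) ≠ 0) (h : IsEquivariant ψ γ) (hγ : γ.IsAlt) (m n : k) :
    twistedBracket σ (fun a => (Fintype.card k : L)⁻¹ * algebraMap A L (fourierCoeff ψ γ a))
        (algebraMap A L (ψ m)) (algebraMap A L (ψ n)) = algebraMap A L (γ (ψ m) (ψ n)) := by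
  let f : A →ₗ[A] L := (Fintype.card k : L)⁻¹ • Algebra.linearMap A L
  have f_card_mul (x : A) : f ((Fintype.card k : A) * x) = algebraMap A L x := by
    simp [f, hcard]
  have summand (a : k) : f (fourierCoeff ψ γ a) * (conj σ a 1 * conj σ (1 - a) 1)
      = f (fourierCoeff ψ γ a) := by
    obtain rfl | ha := eq_or_ne a 0
    · simp [fourierCoeff_zero hψ]
    obtain rfl | ha' := eq_or_ne a 1
    · simp [fourierCoeff_one hψ h hγ]
    simp [conj_of_ne_zero σ ha, conj_of_ne_zero σ (sub_ne_zero.2 ha'.symm)]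
  calc
    _ = twistedBracket σ (fun a => f (fourierCoeff ψ γ a)) (ψ m • 1) (ψ n • 1) := by
      rw [Algebra.algebraMap_eq_smul_one (ψ m), Algebra.algebraMap_eq_smul_one (ψ n)]
      rfl
    _ = ψ n • f (fourierSum ψ (fourierCoeff ψ γ) (m - n)) := by
      simp only [twistedBracket_smul_smul hσψ, summand, map_fourierSum]
    _ = _ := by
      rw [fourierSum_fourierCoeff hψ, f_card_mul, h.apply_apply, Algebra.smul_def, map_mul]

variable [IsDomain R] [Algebra R F] [Algebra R L] [IsScalarTower R F L] [IsScalarTower R A L]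
  [Module.IsTorsionFree R L]

theorem exists_restrictsTo_twistedBracket (hψ : ψ.IsPrimitive) (hσψ : Intertwines σ ψ)
    (hcard : (Fintype.card k : L) ≠ 0) (h : IsEquivariant ψ γ) (hγ : γ.IsAlt)
    (hspan : ∀ x : A, ∃ r : R, r ≠ 0 ∧ r • x ∈ Submodule.span R (Set.range ψ)) :
    ∃ c : k → L, (∀ a, c (1 - a) = -c a) ∧ c 1 = 0 ∧ RestrictsTo (twistedBracket σ c) γ := by
  refine ⟨fun a => (Fintype.card k : L)⁻¹ * algebraMap A L (fourierCoeff ψ γ a), fun a => ?_, ?_,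
    fun x y => ?_⟩
  · simp only [fourierCoeff_one_sub h hγ, map_neg, mul_neg]
  · simp only [fourierCoeff_one hψ h hγ, map_zero, mul_zero]
  let f := (IsScalarTower.toAlgHom R A L).toLinearMap
  have agree := linearMap_ext₂_of_smul_mem_span hspan (f := γ.compr₂ f)
    (g := (LinearMap.restrictScalars₁₂ R R (twistedBracket σ _)).compl₁₂ f f) <| by
      rintro _ ⟨m, rfl⟩ _ ⟨n, rfl⟩
      exact (twistedBracket_fourierCoeff hψ hσψ hcard h hγ m n).symm
  exact LinearMap.congr_fun₂ agree x y

end BracketOfCoefficients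

section Cyclotomic

open Polynomial

theorem isEisensteinAt_cyclotomic_comp_X_add_one {R : Type*} [CommRing R] {q : ℕ}
    [Fact q.Prime] {P : Ideal R} (hP : P ≠ ⊤) (hq : (q : R) ∈ P) (hq' : (q : R) ∉ P ^ 2) :
    ((cyclotomic q R).comp (X + 1)).IsEisensteinAt P := by
  have hmonic : ((cyclotomic q R).comp (X + 1)).Monic := by
    simpa using (cyclotomic.monic q R).comp_X_add_C 1
  refine hmonic.isEisensteinAt_of_mem_of_notMem hP (fun {n} hn => ?_) ?_
  · have hweak := (cyclotomic_comp_X_add_one_isEisensteinAt q).isWeaklyEisensteinAt.map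
      (Int.castRingHom R)
    rw [Polynomial.map_comp, map_cyclotomic, Polynomial.map_add, map_X, Polynomial.map_one] at hweak
    refine Ideal.map_le_iff_le_comap.2 ?_ (hweak.mem hn)
    simpa [Ideal.span_le] using hq
  · rw [coeff_zero_eq_eval_zero, eval_comp, eval_add, eval_X, eval_one, zero_add,
      eval_one_cyclotomic_prime]
    exact hq'

theorem irreducible_cyclotomic_of_mem_of_notMem {R : Type*} [CommRing R] [IsDomain R] {q : ℕ}
    [hq₀ : Fact q.Prime] {P : Ideal R} [hP : P.IsPrime] (hq : (q : R) ∈ P) (hq' : (q : R) ∉ P ^ 2) :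
    Irreducible (cyclotomic q R) := by
  have hshift : algEquivAevalXAddC (1 : R) (cyclotomic q R) = (cyclotomic q R).comp (X + 1) := by
    rw [algEquivAevalXAddC_apply, ← comp_eq_aeval, C_1]
  rw [← MulEquiv.irreducible_iff (algEquivAevalXAddC (1 : R)), hshift]
  refine (isEisensteinAt_cyclotomic_comp_X_add_one hP.ne_top hq hq').irreducible hP ?_ ?_
  · simpa using ((cyclotomic.monic q R).comp_X_add_C 1).isPrimitive
  · rw [natDegree_comp, ← C_1, natDegree_X_add_C, natDegree_cyclotomic, mul_one]
    exact Nat.totient_pos.2 hq₀.out.pos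

theorem irreducible_cyclotomic_padic (q : ℕ) [Fact q.Prime] : Irreducible (cyclotomic q ℚ_[q]) := by
  have hmem : (q : ℤ_[q]) ∈ IsLocalRing.maximalIdeal ℤ_[q] := by
    rw [PadicInt.maximalIdeal_eq_span_p]
    exact Ideal.mem_span_singleton_self _
  have hnotMem : (q : ℤ_[q]) ∉ IsLocalRing.maximalIdeal ℤ_[q] ^ 2 := by
    rw [PadicInt.maximalIdeal_eq_span_p, Ideal.span_singleton_pow, Ideal.mem_span_singleton]
    nth_rw 2 [← pow_one (q : ℤ_[q])]
    rw [pow_dvd_pow_iff PadicInt.prime_p.ne_zero PadicInt.prime_p.not_isUnit]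
    norm_num
  have hirr := irreducible_cyclotomic_of_mem_of_notMem hmem hnotMem
  rwa [(cyclotomic.monic q ℤ_[q]).irreducible_iff_irreducible_map_fraction_map (K := ℚ_[q]),
    map_cyclotomic] at hirr

theorem isCyclotomicExtension_of_adjoin_eq_top {F L : Type*} [Field F] [Field L] [Algebra F L]
    {n : ℕ} [NeZero n] {ζ : L} (hζ : IsPrimitiveRoot ζ n) (hgen : Algebra.adjoin F {ζ} = ⊤) :
    IsCyclotomicExtension {n} F L :=
  (IsCyclotomicExtension.iff_singleton n F L).2 ⟨⟨ζ, hζ⟩, fun _ =>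
    Algebra.adjoin_mono (by simpa using hζ.pow_eq_one) (hgen ▸ Algebra.mem_top)⟩

theorem exists_monoidHom_algEquiv_apply_eq_pow {F L : Type*} [Field F] [Field L] [Algebra F L]
    {n : ℕ} [NeZero n] [IsCyclotomicExtension {n} F L] (hirr : Irreducible (cyclotomic n F)) :
    ∃ σ : (ZMod n)ˣ →* (L ≃ₐ[F] L), ∀ b (ζ : L), ζ ^ n = 1 → σ b ζ = ζ ^ (b : ZMod n).val := by
  let e := IsCyclotomicExtension.autEquivPow L hirr
  have hzeta := IsCyclotomicExtension.zeta_spec n F L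
  refine ⟨e.symm, fun b ζ hζ => ?_⟩
  obtain ⟨j, -, rfl⟩ := hzeta.eq_pow_of_pow_eq_one hζ
  have hb : hzeta.autToPow F (e.symm b) = b := e.apply_symm_apply b
  calc
    _ = e.symm b (IsCyclotomicExtension.zeta n F L) ^ j := map_pow _ _ _
    _ = _ := by rw [← hzeta.autToPow_spec F (e.symm b), hb, ← pow_mul, ← pow_mul, mul_comm]

end Cyclotomic

section Valuations

open scoped NNReal

theorem valuation_sub_one_pow_eq_of_invariant {L Γ : Type*} [Field L]
    [LinearOrderedCommGroupWithZero Γ] (v : Valuation L Γ) {n : ℕ} {ζ : L}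
    (hζ : IsPrimitiveRoot ζ (n + 1))
    (hv : ∀ j, 0 < j → j ≤ n → v (ζ ^ j - 1) = v (ζ - 1)) : v (ζ - 1) ^ n = v (n + 1) := by
  calc
    v (ζ - 1) ^ n = ∏ j ∈ Finset.range n, v (1 - ζ ^ (j + 1)) := by
      rw [Finset.prod_eq_pow_card (b := v (ζ - 1)) fun j hj => ?_, Finset.card_range]
      rw [Valuation.map_sub_swap, hv _ j.succ_pos (Finset.mem_range.1 hj)]
    _ = v (n + 1) := by rw [← map_prod, hζ.prod_one_sub_pow_eq_order]

theorem valuation_sub_one_pow {F L Γ : Type*} [Field F] [Field L] [Algebra F L]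
    [LinearOrderedCommGroupWithZero Γ] (v : Valuation L Γ) {q : ℕ} [hq : Fact q.Prime]
    {σ : (ZMod q)ˣ →* (L ≃ₐ[F] L)} (hv : ∀ b x, v (σ b x) = v x) {ζ : L}
    (hζ : IsPrimitiveRoot ζ q) (hσ : ∀ b, σ b ζ = ζ ^ (b : ZMod q).val) :
    v (ζ - 1) ^ (q - 1) = v q := by
  obtain ⟨n, rfl⟩ : ∃ n, q = n + 1 := Nat.exists_eq_add_one.2 hq.out.pos
  rw [Nat.add_sub_cancel, Nat.cast_add_one, valuation_sub_one_pow_eq_of_invariant v hζ]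
  intro j hj hjn
  have hj0 : (j : ZMod (n + 1)) ≠ 0 := fun h =>
    (Nat.le_of_dvd hj ((ZMod.natCast_eq_zero_iff _ _).1 h)).not_gt (Nat.lt_succ_of_le hjn)
  rw [← hv (Units.mk0 _ hj0) (ζ - 1), map_sub (σ _), hσ, map_one, Units.val_mk0,
    ZMod.val_natCast_of_lt (Nat.lt_succ_of_le hjn)]

section SpectralValuation

variable (F L : Type*) [NontriviallyNormedField F] [CompleteSpace F] [IsUltrametricDist F]
  [Field L] [Algebra F L] [Algebra.IsAlgebraic F L]

/-- The spectral norm on an algebraic extension of a complete nonarchimedean field, as a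
valuation. -/
noncomputable def spectralValuation : Valuation L ℝ≥0 where
  toFun x := ⟨spectralNorm F L x, spectralNorm_nonneg x⟩
  map_zero' := NNReal.eq spectralNorm_zero
  map_one' := NNReal.eq spectralNorm_one
  map_mul' x y := NNReal.eq (spectralAlgNorm_mul x y)
  map_add_le_max' x y := le_max_iff.2 (le_max_iff.1 (isNonarchimedean_spectralNorm x y))

theorem spectralValuation_algEquiv (σ : L ≃ₐ[F] L) (x : L) :
    spectralValuation F L (σ x) = spectralValuation F L x :=
  NNReal.eq (spectralNorm_eq_of_equiv σ x).symm

end SpectralValuation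

theorem spectralValuation_le_one_iff {q : ℕ} [Fact q.Prime] {L : Type*} [Field L]
    [Algebra ℚ_[q] L] [Algebra.IsAlgebraic ℚ_[q] L] [Algebra ℤ_[q] L]
    [IsScalarTower ℤ_[q] ℚ_[q] L] {x : L} :
    spectralValuation ℚ_[q] L x ≤ 1 ↔ IsIntegral ℤ_[q] x := by
  have hx : IsIntegral ℚ_[q] x := Algebra.IsIntegral.isIntegral x
  change spectralNorm ℚ_[q] L x ≤ 1 ↔ _
  rw [spectralNorm, spectralValue_le_one_iff (minpoly.monic hx)]
  constructor
  · intro h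
    have hlift : minpoly ℚ_[q] x ∈ Polynomial.lifts (algebraMap ℤ_[q] ℚ_[q]) :=
      (Polynomial.lifts_iff_coeff_lifts _).2 fun n => ⟨⟨_, h n⟩, rfl⟩
    obtain ⟨f, hf, -, hmonic⟩ :=
      Polynomial.lifts_and_natDegree_eq_and_monic hlift (minpoly.monic hx)
    refine ⟨f, hmonic, ?_⟩
    rw [IsScalarTower.algebraMap_eq ℤ_[q] ℚ_[q] L, ← Polynomial.eval₂_map, hf]
    exact minpoly.aeval _ _
  · intro h n
    rw [minpoly.isIntegrallyClosed_eq_field_fractions' ℚ_[q] h, Polynomial.coeff_map]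
    exact PadicInt.norm_le_one _

end Valuations

section AddCharPowers

theorem adjoin_singleton_le_span_range {R A n : Type*} [CommRing R] [CommRing A] [Algebra R A]
    [CommRing n] (ψ : AddChar n A) :
    (Algebra.adjoin R {ψ 1}).toSubmodule ≤ Submodule.span R (Set.range ψ) := by
  rw [Algebra.adjoin_eq_span]
  refine Submodule.span_mono fun x hx => ?_
  obtain ⟨j, rfl⟩ := Submonoid.mem_closure_singleton.1 hx
  exact ⟨j • 1, AddChar.map_nsmul_eq_pow ψ j 1⟩

theorem exists_ne_zero_smul_mem_adjoin_singleton {R F A L : Type*} [CommRing R] [Nontrivial R]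
    [CommRing F] [CommRing A] [CommRing L] [Algebra R F] [IsFractionRing R F] [Algebra R A]
    [Algebra A L] [FaithfulSMul A L] [Algebra F L] [Algebra R L] [IsScalarTower R F L]
    [IsScalarTower R A L] {θ : A} (hgen : Algebra.adjoin F {algebraMap A L θ} = ⊤) (x : A) :
    ∃ r : R, r ≠ 0 ∧ r • x ∈ Algebra.adjoin R {θ} := by
  obtain ⟨⟨r, hr⟩, hx⟩ := multiple_mem_adjoin_of_mem_localization_adjoin (nonZeroDivisors R) F
    {algebraMap A L θ} (algebraMap A L x) (hgen ▸ Algebra.mem_top)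
  refine ⟨r, nonZeroDivisors.ne_zero hr, ?_⟩
  have himage : Algebra.adjoin R {algebraMap A L θ}
      = (Algebra.adjoin R {θ}).map (IsScalarTower.toAlgHom R A L) := by
    rw [AlgHom.map_adjoin_singleton]
    rfl
  rw [himage] at hx
  obtain ⟨y, hy, hyx⟩ := hx
  rwa [← FaithfulSMul.algebraMap_injective A L
    (hyx.trans (map_smul (IsScalarTower.toAlgHom R A L) r x).symm)]

theorem exists_ne_zero_smul_mem_span_range {R F A L n : Type*} [CommRing R] [Nontrivial R]
    [CommRing F] [CommRing A] [CommRing L] [CommRing n] [Algebra R F] [IsFractionRing R F]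
    [Algebra R A] [Algebra A L] [FaithfulSMul A L] [Algebra F L] [Algebra R L]
    [IsScalarTower R F L] [IsScalarTower R A L] {ψ : AddChar n A}
    (hgen : Algebra.adjoin F {algebraMap A L (ψ 1)} = ⊤) (x : A) :
    ∃ r : R, r ≠ 0 ∧ r • x ∈ Submodule.span R (Set.range ψ) := by
  obtain ⟨r, hr, hx⟩ := exists_ne_zero_smul_mem_adjoin_singleton (R := R) hgen x
  exact ⟨r, hr, adjoin_singleton_le_span_range ψ hx⟩

theorem isEquivariant_of_apply_one {R A : Type*} [CommRing R] [CommRing A] [Algebra R A] {n : ℕ}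
    [NeZero n] {ψ : AddChar (ZMod n) A} {γ : A →ₗ[R] A →ₗ[R] A}
    (h : ∀ x y, γ (ψ 1 * x) (ψ 1 * y) = ψ 1 * γ x y) : IsEquivariant ψ γ := by
  have hpow (j : ℕ) (x y : A) : γ (ψ 1 ^ j * x) (ψ 1 ^ j * y) = ψ 1 ^ j * γ x y := by
    induction j with
    | zero => simp
    | succ j ih => rw [pow_succ', mul_assoc, mul_assoc, h, ih, mul_assoc]
  intro m
  rw [← ZMod.natCast_zmod_val m, ← nsmul_one, AddChar.map_nsmul_eq_pow]
  exact hpow _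

end AddCharPowers

section IntegralEstimates

open scoped NNReal

variable {A L Γ₀ : Type*} [CommRing A] [CommRing L] [Algebra A L]
  [LinearOrderedCommGroupWithZero Γ₀] {v : Valuation L Γ₀}

theorem valuation_le_of_mem_span (hA : ∀ x, v (algebraMap A L x) ≤ 1) {S : Set A} {r : Γ₀}
    (hS : ∀ x ∈ S, v (algebraMap A L x) ≤ r) {x : A} (hx : x ∈ Ideal.span S) :
    v (algebraMap A L x) ≤ r := by
  induction hx using Submodule.span_induction with
  | mem x hx => exact hS x hx
  | zero => simp
  | add x y _ _ hx hy =>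
    rw [map_add]
    exact v.map_add_le hx hy
  | smul a x _ hx =>
    rw [smul_eq_mul, map_mul, map_mul]
    exact (mul_le_of_le_one_left' (hA a)).trans hx

theorem valuation_le_pow_of_mem_span_singleton_pow (hA : ∀ x, v (algebraMap A L x) ≤ 1) {κ : A}
    {n : ℕ} {x : A} (hx : x ∈ Ideal.span {κ} ^ n) :
    v (algebraMap A L x) ≤ v (algebraMap A L κ) ^ n := by
  rw [Ideal.span_singleton_pow] at hx
  refine valuation_le_of_mem_span hA (fun y hy => ?_) hx
  rw [Set.mem_singleton_iff.1 hy, map_pow, map_pow]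

variable {k F R : Type*} [Field k] [Fintype k] [DecidableEq k] [CommRing F] [Algebra F L]
  [IsDomain A] [CommRing R] [Algebra R A] {σ : kˣ →* (L ≃ₐ[F] L)} {ψ : AddChar k A}
  {γ : A →ₗ[R] A →ₗ[R] A} {c : k → L}

theorem valuation_card_mul_coeff_le
    (hv : ∀ b x, v (σ b x) = v x) (hψ : ψ.IsPrimitive) (hσψ : Intertwines σ ψ)
    (hγ : RestrictsTo (twistedBracket σ c) γ) {I J : Ideal A} (hIJ : ∀ x ∈ I, ∀ y ∈ I, γ x y ∈ J)
    {r : Γ₀} (hJ : ∀ x ∈ J, v (algebraMap A L x) ≤ r) {x y : A} (hx : x ∈ I) (hy : y ∈ I)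
    {a : k} (ha : a ≠ 0) (ha' : 1 - a ≠ 0) :
    v (Fintype.card k) * (v (c a) * (v (algebraMap A L x) * v (algebraMap A L y))) ≤ r := by
  have hmem : fourierSum ψ (fun m => γ (ψ m * x) y) (-a) ∈ J :=
    J.sum_mem fun m _ => J.mul_mem_left _ (hIJ _ (I.mul_mem_left _ hx) _ hy)
  have := hJ _ hmem
  rwa [← card_smul_coeff_eq hψ hσψ hγ, Algebra.smul_def, map_natCast, map_mul, map_mul, map_mul,
    valuation_conj hv ha, valuation_conj hv ha'] at this

theorem valuation_coeff_mul_pow_le_one (hA : ∀ x, v (algebraMap A L x) ≤ 1)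
    (hv : ∀ b x, v (σ b x) = v x) (hψ : ψ.IsPrimitive) (hσψ : Intertwines σ ψ)
    (hγ : RestrictsTo (twistedBracket σ c) γ) (hc : ∀ a, c (1 - a) = -c a) (hc1 : c 1 = 0)
    {κ : A} {n i : ℕ} (hκ : v (algebraMap A L κ) ≠ 0)
    (hn : v (algebraMap A L κ) ^ (n + 1) = v (Fintype.card k))
    (hi : ∀ x ∈ Ideal.span {κ} ^ i, ∀ y ∈ Ideal.span {κ} ^ i,
      γ x y ∈ Ideal.span {κ} ^ (2 * i + 1)) (a : k) :
    v (c a) * v (algebraMap A L κ) ^ n ≤ 1 := by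
  obtain rfl | ha := eq_or_ne a 0
  · have hc0 : c 0 = 0 := by rw [← sub_self (1 : k), hc, hc1, neg_zero]
    simp [hc0]
  obtain ha' | ha' := eq_or_ne (1 - a) 0
  · simp [← sub_eq_zero.1 ha', hc1]
  have hmem : κ ^ i ∈ Ideal.span {κ} ^ i := Ideal.pow_mem_pow (Ideal.mem_span_singleton_self κ) i
  have hle := valuation_card_mul_coeff_le hv hψ hσψ hγ hi
    (fun _ => valuation_le_pow_of_mem_span_singleton_pow hA) hmem hmem ha ha'
  rw [map_pow, map_pow, ← hn] at hle
  refine le_of_mul_le_mul_right ?_ (pow_pos (zero_lt_iff.2 hκ) (2 * i + 1))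
  calc
    _ = v (algebraMap A L κ) ^ (n + 1)
          * (v (c a) * (v (algebraMap A L κ) ^ i * v (algebraMap A L κ) ^ i)) := by
      rw [two_mul, pow_succ, pow_succ, pow_add]
      ac_rfl
    _ ≤ 1 * v (algebraMap A L κ) ^ (2 * i + 1) := by rwa [one_mul]

theorem pow_mul_pow_le_of_mul_pow_le_one {p i : ℕ} (hp : 5 ≤ p) (hi : p ≤ i) {ρ M : ℝ≥0}
    (hρ : ρ ≤ 1) (hM : M * ρ ^ (p - 2) ≤ 1) :
    ρ ^ (p * i + 1) * M ^ (p - 2) ≤ (ρ ^ (p - 1)) ^ 2 * (M ^ 2 * (ρ ^ i) ^ 3) := by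
  obtain ⟨n, rfl⟩ := Nat.exists_eq_add_of_le hp
  obtain ⟨j, rfl⟩ := Nat.exists_eq_add_of_le hi
  rw [show 5 + n - 2 = n + 3 by omega] at hM ⊢
  rw [show 5 + n - 1 = n + 4 by omega]
  calc
    _ = (M * ρ ^ (n + 3)) ^ (n + 1) * ρ ^ (n + (n + 2) * j)
          * ((ρ ^ (n + 4)) ^ 2 * (M ^ 2 * (ρ ^ (5 + n + j)) ^ 3)) := by ring
    _ ≤ 1 * 1 * ((ρ ^ (n + 4)) ^ 2 * (M ^ 2 * (ρ ^ (5 + n + j)) ^ 3)) := by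
      gcongr
      · exact pow_le_one₀ zero_le hM
      · exact pow_le_one₀ zero_le hρ
    _ = _ := by rw [one_mul, one_mul]

end IntegralEstimates

section MaximalOrder

open scoped NNReal

variable {p : ℕ} [Fact p.Prime] {K : Type} [Field K] [Algebra ℤ_[p] K] {θ : 𝒪 p K}
  {γ : 𝒪 p K →ₗ[ℤ_[p]] 𝒪 p K →ₗ[ℤ_[p]] 𝒪 p K} {v : Valuation K ℝ≥0}
  {i : ℕ}

theorem valuation_le_of_mem_Wid (hint : v.Integers (𝒪 p K)) {M : ℝ≥0}
    (hM : ∀ x y : 𝒪 p K, v (γ x y) ≤ M * (v x * v y))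
    (hγ : ∀ x ∈ pid p K θ ^ i, ∀ y ∈ pid p K θ ^ i, γ x y ∈ pid p K θ ^ (2 * i + 1))
    {k : ℕ} {x : 𝒪 p K} (hx : x ∈ Wid p K θ γ i (k + 2)) :
    v x ≤ v (θ - 1 : 𝒪 p K) ^ ((k + 2) * i + 1) * M ^ k := by
  induction k generalizing x with
  | zero =>
    refine valuation_le_of_mem_span hint.map_le_one ?_ hx
    rintro _ ⟨y, hy, z, hz, rfl⟩
    rw [pow_zero, mul_one, zero_add]
    exact valuation_le_pow_of_mem_span_singleton_pow hint.map_le_one (hγ y hy z hz)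
  | succ k ih =>
    refine valuation_le_of_mem_span hint.map_le_one ?_ hx
    rintro _ ⟨y, hy, z, hz, rfl⟩
    calc
      v (γ y z) ≤ M * (v y * v z) := hM y z
      _ ≤ M * (v (θ - 1 : 𝒪 p K) ^ ((k + 2) * i + 1) * M ^ k * v (θ - 1 : 𝒪 p K) ^ i) := by
        gcongr
        · exact ih hy
        · exact valuation_le_pow_of_mem_span_singleton_pow hint.map_le_one hz
      _ = _ := by ring

variable {F : Type*} [CommRing F] [Algebra F K] {σ : (ZMod p)ˣ →* (K ≃ₐ[F] K)}
  {ψ : AddChar (ZMod p) (𝒪 p K)} {c : ZMod p → K}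

theorem exists_mem_Jid_le_valuation (hv : ∀ b x, v (σ b x) = v x) (hψ : ψ.IsPrimitive)
    (hσψ : Intertwines σ ψ) (hγ : RestrictsTo (twistedBracket σ c) γ)
    (hc : ∀ a, c (1 - a) = -c a) (hc1 : c 1 = 0) {a : ZMod p} (hmax : ∀ b, v (c b) ≤ v (c a)) :
    ∃ j ∈ Jid p K θ γ i, v p ^ 2 * (v (c a) ^ 2 * (v (θ - 1 : 𝒪 p K) ^ i) ^ 3) ≤ v j := by
  have hκ : (θ - 1) ^ i ∈ pid p K θ ^ i :=
    Ideal.pow_mem_pow (Ideal.mem_span_singleton_self (θ - 1)) i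
  have hJ : ∀ x ∈ pid p K θ ^ i, ∀ y ∈ pid p K θ ^ i, ∀ z ∈ pid p K θ ^ i,
      jacobiator γ x y z ∈ Jid p K θ γ i :=
    fun x hx y hy z hz => Ideal.subset_span ⟨x, hx, y, hy, z, hz, rfl⟩
  obtain ⟨s, t, hst⟩ := exists_le_valuation_jacobiConst_mul hv hc hc1 hmax
    (algebraMap (𝒪 p K) K ((θ - 1) ^ i))
  obtain ⟨j, hj, hjst⟩ :=
    exists_mem_algebraMap_eq_card_smul_jacobiConst hψ hσψ hγ hJ hκ hκ hκ s t
  refine ⟨j, hj, ?_⟩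
  change _ ≤ v (algebraMap (𝒪 p K) K j)
  rw [hjst, Algebra.smul_def, map_mul v, map_pow (algebraMap _ _), map_natCast (algebraMap _ _),
    map_pow v, ZMod.card]
  rw [map_pow (algebraMap _ _), map_pow v] at hst
  exact mul_le_mul_right hst _

theorem Wid_le_Jid_of_restrictsTo_twistedBracket (hint : v.Integers (𝒪 p K))
    (hv : ∀ b x, v (σ b x) = v x) (hψ : ψ.IsPrimitive) (hσψ : Intertwines σ ψ)
    (hr : RestrictsTo (twistedBracket σ c) γ) (hc : ∀ a, c (1 - a) = -c a) (hc1 : c 1 = 0)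
    (hθ : θ ≠ 1) (hθp : v (θ - 1 : 𝒪 p K) ^ (p - 1) = v p) (hp : 5 ≤ p) (hi : p ≤ i)
    (hγ : ∀ x ∈ pid p K θ ^ i, ∀ y ∈ pid p K θ ^ i, γ x y ∈ pid p K θ ^ (2 * i + 1)) :
    Wid p K θ γ i p ≤ Jid p K θ γ i := by
  obtain ⟨a, hmax⟩ := Finite.exists_max fun b => v (c b)
  obtain ⟨j, hjJ, hj⟩ := exists_mem_Jid_le_valuation (θ := θ) (i := i) hv hψ hσψ hr hc hc1 hmax
  have hp2 : p - 2 + 2 = p := by omega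
  have hM : v (c a) * v (θ - 1 : 𝒪 p K) ^ (p - 2) ≤ 1 :=
    valuation_coeff_mul_pow_le_one hint.map_le_one hv hψ hσψ hr hc hc1
      (hint.valuation_pos_iff_ne_zero.2 (sub_ne_zero.2 hθ)).ne'
      (by rw [ZMod.card, ← hθp, show p - 2 + 1 = p - 1 by omega]; rfl) hγ a
  intro w hw
  refine Ideal.mem_of_dvd _ (hint.dvd_of_le ?_) hjJ
  calc
    v w ≤ v (θ - 1 : 𝒪 p K) ^ (p * i + 1) * v (c a) ^ (p - 2) := by
      have hγM (x y : 𝒪 p K) : v (γ x y) ≤ v (c a) * (v x * v y) :=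
        (congrArg v (hr x y)).trans_le (valuation_twistedBracket_le hv hmax _ _)
      have hw' : w ∈ Wid p K θ γ i (p - 2 + 2) := by rwa [hp2]
      simpa only [hp2] using valuation_le_of_mem_Wid hint hγM hγ hw'
    _ ≤ _ := pow_mul_pow_le_of_mul_pow_le_one hp hi (hint.map_le_one (θ - 1)) hM
    _ ≤ v j := by rwa [hθp]

end MaximalOrder

section PadicCyclotomic

theorem isAlgebraic_of_adjoin_singleton_eq_top {F L : Type*} [Field F] [Field L] [Algebra F L]
    {x : L} (hx : IsIntegral F x) (hgen : Algebra.adjoin F {x} = ⊤) : Algebra.IsAlgebraic F L :=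
  ⟨fun y => IsIntegral.isAlgebraic <|
    (adjoin_le_integralClosure hx (hgen ▸ Algebra.mem_top : y ∈ Algebra.adjoin F {x}))⟩

theorem exists_addChar_isPrimitive_intertwines {F A L : Type*} [CommRing F] [CommRing A]
    [CommRing L] [Algebra F L] [Algebra A L] [FaithfulSMul A L] {q : ℕ} [Fact q.Prime] {ζ : A}
    (hζ : IsPrimitiveRoot (algebraMap A L ζ) q) {σ : (ZMod q)ˣ →* (L ≃ₐ[F] L)}
    (hσ : ∀ b, σ b (algebraMap A L ζ) = algebraMap A L ζ ^ (b : ZMod q).val) :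
    ∃ ψ : AddChar (ZMod q) A, ψ.IsPrimitive ∧ ψ 1 = ζ ∧ Intertwines σ ψ := by
  have hζ' : IsPrimitiveRoot ζ q :=
    hζ.of_map_of_injective (FaithfulSMul.algebraMap_injective A L)
  refine ⟨AddChar.zmodChar q hζ'.pow_eq_one,
    AddChar.zmodChar_primitive_of_primitive_root q hζ', ?_, fun b m => ?_⟩
  · rw [AddChar.zmodChar_apply, ZMod.val_one, pow_one]
  · rw [AddChar.zmodChar_apply, AddChar.zmodChar_apply, map_pow, map_pow, hσ, ← pow_mul,
      map_pow, ZMod.val_mul, ← pow_eq_pow_mod _ hζ.pow_eq_one]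

variable {p : ℕ} [Fact p.Prime] {K : Type} [Field K] [Algebra ℚ_[p] K] [Algebra ℤ_[p] K]
  [IsScalarTower ℤ_[p] ℚ_[p] K]

theorem spectralValuation_integers [Algebra.IsAlgebraic ℚ_[p] K] :
    (spectralValuation ℚ_[p] K).Integers (𝒪 p K) where
  hom_inj := Subtype.val_injective
  map_le_one x := spectralValuation_le_one_iff.2 x.2
  exists_of_le_one x hx := ⟨⟨x, spectralValuation_le_one_iff.1 hx⟩, rfl⟩

variable {θ : 𝒪 p K} {γ : 𝒪 p K →ₗ[ℤ_[p]] 𝒪 p K →ₗ[ℤ_[p]] 𝒪 p K}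

theorem frame_class_at_most_p_sub_one_general (hp : 5 ≤ p) (hθ : IsPrimitiveRoot (θ : K) p)
    (hgen : Algebra.adjoin ℚ_[p] {(θ : K)} = ⊤) (hγ : IsPEquivariant p K θ γ) {i : ℕ}
    (hi : p - 1 < i)
    (hγi : ∀ x ∈ pid p K θ ^ i, ∀ y ∈ pid p K θ ^ i, γ x y ∈ pid p K θ ^ (2 * i + 1)) :
    Wid p K θ γ i p ≤ Jid p K θ γ i := by
  have : CharZero K := charZero_of_injective_algebraMap (algebraMap ℚ_[p] K).injective
  have : Module.IsTorsionFree ℤ_[p] K := .trans_faithfulSMul ℤ_[p] ℚ_[p] K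
  have : Algebra.IsAlgebraic ℚ_[p] K :=
    isAlgebraic_of_adjoin_singleton_eq_top (IsIntegral.tower_top (R := ℤ_[p]) θ.2) hgen
  have : IsCyclotomicExtension {p} ℚ_[p] K := isCyclotomicExtension_of_adjoin_eq_top hθ hgen
  have hθ1 : θ ≠ 1 := fun h => hθ.ne_one (by omega) (congrArg Subtype.val h)
  obtain ⟨σ, hσ⟩ := exists_monoidHom_algEquiv_apply_eq_pow (L := K) (irreducible_cyclotomic_padic p)
  have hσθ (b : (ZMod p)ˣ) : σ b θ = (θ : K) ^ (b : ZMod p).val := hσ b θ hθ.pow_eq_one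
  have hv (b : (ZMod p)ˣ) := spectralValuation_algEquiv ℚ_[p] K (σ b)
  obtain ⟨ψ, hψ, rfl, hσψ⟩ := exists_addChar_isPrimitive_intertwines (A := 𝒪 p K) hθ hσθ
  obtain ⟨c, hc, hc1, hr⟩ := exists_restrictsTo_twistedBracket hψ hσψ
    (by simp [ZMod.card, NeZero.ne p]) (isEquivariant_of_apply_one hγ.2) hγ.1
    (exists_ne_zero_smul_mem_span_range hgen)
  exact Wid_le_Jid_of_restrictsTo_twistedBracket spectralValuation_integers hv hψ hσψ hr hc hc1
    hθ1 (valuation_sub_one_pow _ hv hθ hσθ) hp (by omega) hγi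

end PadicCyclotomic

/-- For `i > p−1` and `γ ∈ Ĥ_i` with `J_i(γ) ≠ 0`, the Lie ring
`L_i(γ) = 𝔭^i/J_i(γ)` has class at most `p−1`:  `W_p(i) ⊆ J_i(γ)`. -/
theorem frame_class_at_most_p_sub_one (hp : 5 ≤ p) (hθ : IsPrimitiveRoot (θ : K) p)
    (hgen : Algebra.adjoin ℚ_[p] {(θ : K)} = ⊤)
    (hγ : IsPEquivariant p K θ γ)
    (i : ℕ) (hi : p - 1 < i) (hγi : InHhat p K θ i γ) (hJ : Jid p K θ γ i ≠ ⊥) :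
    Wid p K θ γ i p ≤ Jid p K θ γ i :=
  frame_class_at_most_p_sub_one_general hp hθ hgen hγ hi fun _ hx _ hy =>
    hγi.le (Submodule.subset_span (Set.mem_image2_of_mem hx hy))

end MaximalClassFrame
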